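/- Suppose M and N are maps and the connected sum M⊕N exists with respect to flags f_M and f_N. Suppose furthermore that for each I ∉ T(M) there exists an I-inconsistent cycle of M none of whose visited flags belongs to the face F_M, and likewise for N (with F_N). Then T(M⊕N) = T(M) ∩ T(N). -/

import Mathlib

/-- A (combinatorial) map: a nonempty set of flags `Ω` together with three
permutations `r 0, r 1, r 2` which are fixed-point-free involutions, such that
`r 0` and `r 2` commute with fixed-point-free product, and such that the
connection group `⟨r 0, r 1, r 2⟩` acts transitively on `Ω`. -/
structure CMap (Ω : Type) where
  r : Fin 3 → Equiv.Perm Ω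
  nonempty : Nonempty Ω
  invol : ∀ (i : Fin 3) (f : Ω), r i (r i f) = f
  fpf : ∀ (i : Fin 3) (f : Ω), r i f ≠ f
  comm02 : ∀ f : Ω, r 0 (r 2 f) = r 2 (r 0 f)
  fpf02 : ∀ f : Ω, r 0 (r 2 f) ≠ f
  flag_transitive : ∀ f g : Ω,
    ∃ w ∈ Subgroup.closure ({r 0, r 1, r 2} : Set (Equiv.Perm Ω)), w f = g

/-- `a` is an `I`-coloring with respect to the connections `r`. -/
def IsColoringOn {Ω : Type} (r : Fin 3 → Ω → Ω) (I : Set (Fin 3)) (a : Ω → ZMod 2) : Prop :=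
  ∀ (f : Ω) (j : Fin 3), (j ∈ I → a (r j f) = a f + 1) ∧ (j ∉ I → a (r j f) = a f)

/-- There exists an `I`-coloring with respect to the connections `r`. -/
def ColorableOn {Ω : Type} (r : Fin 3 → Ω → Ω) (I : Set (Fin 3)) : Prop :=
  ∃ a : Ω → ZMod 2, IsColoringOn r I a

/-- `a` is an `I`-coloring of the map `M`. -/
def CMap.IsColoring {Ω : Type} (M : CMap Ω) (I : Set (Fin 3)) (a : Ω → ZMod 2) : Prop :=
  IsColoringOn (fun j f => M.r j f) I a

/-- The map `M` admits an `I`-coloring. -/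
def CMap.Colorable {Ω : Type} (M : CMap Ω) (I : Set (Fin 3)) : Prop :=
  ∃ a : Ω → ZMod 2, M.IsColoring I a

/-- `T M` is the collection of subsets `I ⊆ {0,1,2}` for which `M` is `I`-colorable. -/
def CMap.T {Ω : Type} (M : CMap Ω) : Set (Set (Fin 3)) :=
  {I | M.Colorable I}

/-- Apply the word `W` (read left to right) to the flag `f`. -/
def CMap.applyWord {Ω : Type} (M : CMap Ω) (W : List (Fin 3)) (f : Ω) : Ω :=
  W.foldl (fun g i => M.r i g) f

/-- `(f, W)` is a cycle of `M`. -/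
def CMap.IsCycle {Ω : Type} (M : CMap Ω) (f : Ω) (W : List (Fin 3)) : Prop :=
  M.applyWord W f = f

open Classical in
/-- A word `W` is `I`-consistent when the number of its entries lying in `I` is even. -/
def Consistent (I : Set (Fin 3)) (W : List (Fin 3)) : Prop :=
  Even (W.countP fun i => decide (i ∈ I))

/-- The face of `M` containing the flag `f`: the orbit of `f` under `⟨r 0, r 1⟩`. -/
def CMap.faceOf {Ω : Type} (M : CMap Ω) (f : Ω) : Set Ω :=
  {g | ∃ w ∈ Subgroup.closure ({M.r 0, M.r 1} : Set (Equiv.Perm Ω)), w f = g}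

/-- `g ↦ g·r₀r₁`, so `(M.faceStep)^[j] f = f·(r₀r₁)ʲ`. -/
def CMap.faceStep {Ω : Type} (M : CMap Ω) (g : Ω) : Ω :=
  M.r 1 (M.r 0 g)

/-- The flag set `(Ω ∖ F_M) ∪ (Ω' ∖ F_N)` of the connected sum. -/
def connSumFlags {Ω Ω' : Type} (M : CMap Ω) (N : CMap Ω') (fM : Ω) (fN : Ω') : Set (Ω ⊕ Ω') :=
  {x | Sum.elim (fun g => g ∉ M.faceOf fM) (fun g => g ∉ N.faceOf fN) x}

/-- The set of flags visited by the cycle `(f, W)`. -/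
def CMap.visits {Ω : Type} (M : CMap Ω) (f : Ω) (W : List (Fin 3)) : Set Ω :=
  {g | ∃ W' : List (Fin 3), W' <+: W ∧ M.applyWord W' f = g}

/-!
A coloring makes every cycle consistent, and a cycle of `M` avoiding the glued face is also a
cycle of the connected sum; so an inconsistent cycle off that face obstructs colorings of the
connected sum as well, whence `T (M ⊕ N) ⊆ T M ∩ T N`. Conversely, two `I`-colorings can be shifted
by a constant so that they fit together at one glued pair of flags; since both change in the same
way when walking around the face, they then fit together at every glued pair.
-/

theorem exists_iterate_eq_of_sameCycle {α : Type*} {σ : Equiv.Perm α} {s : Set α} (hs : s.Finite)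
    (hσ : ∀ x, σ x ∈ s ↔ x ∈ s) {x y : α} (hx : x ∈ s) (hy : y ∈ s) (hxy : σ.SameCycle x y) :
    ∃ n : ℕ, σ^[n] x = y := by
  have : Finite s := hs
  have hcycle : (σ.subtypePerm hσ).SameCycle ⟨x, hx⟩ ⟨y, hy⟩ := hxy.subtypePerm
  obtain ⟨n, hn⟩ := hcycle.exists_nat_pow_eq
  rw [Equiv.Perm.subtypePerm_pow] at hn
  have hpow : (σ ^ n) x = y := congrArg Subtype.val hn
  exact ⟨n, by rwa [Equiv.Perm.coe_pow] at hpow⟩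

namespace CMap

variable {Ω Ω' : Type} {M : CMap Ω} {N : CMap Ω'} {I : Set (Fin 3)}

theorem isColoring_iff {a : Ω → ZMod 2} :
    M.IsColoring I a ↔ ∀ f j, a (M.r j f) = a f + I.indicator 1 j := by
  refine forall₂_congr fun f j ↦ ?_
  by_cases hj : j ∈ I <;> simp [hj]

theorem IsColoring.apply_r {a : Ω → ZMod 2} (ha : M.IsColoring I a) (j : Fin 3) (f : Ω) :
    a (M.r j f) = a f + I.indicator 1 j :=
  isColoring_iff.mp ha f j

theorem IsColoring.add_const {a : Ω → ZMod 2} (ha : M.IsColoring I a) (c : ZMod 2) :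
    M.IsColoring I fun f ↦ a f + c :=
  isColoring_iff.mpr fun f j ↦ by rw [ha.apply_r, add_right_comm]

open Classical in
theorem IsColoring.apply_applyWord {a : Ω → ZMod 2} (ha : M.IsColoring I a)
    (W : List (Fin 3)) (f : Ω) :
    a (M.applyWord W f) = a f + (W.countP fun i ↦ decide (i ∈ I) : ℕ) := by
  induction W generalizing f with
  | nil => simp [applyWord]
  | cons i W ih =>
    change a (M.applyWord W (M.r i f)) = _
    rw [ih, ha.apply_r, List.countP_cons]
    by_cases hi : i ∈ I <;> simp [hi, add_assoc, add_comm]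

theorem IsColoring.consistent_of_isCycle {a : Ω → ZMod 2} (ha : M.IsColoring I a) {f : Ω}
    {W : List (Fin 3)} (hW : M.IsCycle f W) : Consistent I W := by
  classical
  have h := ha.apply_applyWord W f
  rw [hW, left_eq_add, ZMod.natCast_eq_zero_iff_even] at h
  exact h

theorem self_mem_visits (f : Ω) (W : List (Fin 3)) : f ∈ M.visits f W :=
  ⟨[], List.nil_prefix, rfl⟩

theorem visits_subset_visits_cons (f : Ω) (i : Fin 3) (W : List (Fin 3)) :
    M.visits (M.r i f) W ⊆ M.visits f (i :: W) := by
  rintro _ ⟨V, hV, rfl⟩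
  exact ⟨i :: V, (List.prefix_cons_inj i).mpr hV, rfl⟩

theorem applyWord_comm_of_visits_subset {S : Set Ω} {φ : S → Ω'}
    (hφ : ∀ (j : Fin 3) (g g' : S), M.r j g = g' → N.r j (φ g) = φ g')
    {W : List (Fin 3)} {f g : S} (hW : M.visits f W ⊆ S) (hg : M.applyWord W f = g) :
    N.applyWord W (φ f) = φ g := by
  induction W generalizing f with
  | nil => exact congrArg φ (Subtype.ext hg)
  | cons i W ih =>
    have hW' : M.visits (M.r i f) W ⊆ S := (visits_subset_visits_cons _ i W).trans hW
    let f' : S := ⟨M.r i f, hW' (self_mem_visits _ W)⟩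
    change N.applyWord W (N.r i (φ f)) = φ g
    rw [hφ i f f' rfl]
    exact ih hW' hg

theorem T_subset_T_of_inconsistent_cycles {S : Set Ω} {φ : S → Ω'}
    (hφ : ∀ (j : Fin 3) (g g' : S), M.r j g = g' → N.r j (φ g) = φ g')
    (hcyc : ∀ I ∉ M.T, ∃ f W, M.IsCycle f W ∧ ¬Consistent I W ∧ ∀ g ∈ M.visits f W, g ∈ S) :
    N.T ⊆ M.T := by
  rintro I ⟨a, ha⟩
  by_contra hI
  obtain ⟨f, W, hfW, hinc, hS⟩ := hcyc I hI
  let f' : S := ⟨f, hS f (self_mem_visits f W)⟩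
  have hcycle : N.IsCycle (φ f') W := applyWord_comm_of_visits_subset hφ hS hfW
  exact hinc (IsColoring.consistent_of_isCycle ha hcycle)

theorem self_mem_faceOf (f : Ω) : f ∈ M.faceOf f :=
  ⟨1, one_mem _, rfl⟩

theorem r_mem_faceOf_iff {j : Fin 3} (hj : j ≠ 2) {f g : Ω} :
    M.r j g ∈ M.faceOf f ↔ g ∈ M.faceOf f := by
  have hgen : M.r j ∈ Subgroup.closure ({M.r 0, M.r 1} : Set (Equiv.Perm Ω)) := by
    refine Subgroup.subset_closure ?_
    fin_cases j <;> simp_all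
  have hmem {h : Ω} : h ∈ M.faceOf f → M.r j h ∈ M.faceOf f := by
    rintro ⟨w, hw, rfl⟩
    exact ⟨M.r j * w, mul_mem hgen hw, rfl⟩
  exact ⟨fun hg ↦ M.invol j g ▸ hmem hg, hmem⟩

theorem faceStep_mem_faceOf_iff {f g : Ω} : M.faceStep g ∈ M.faceOf f ↔ g ∈ M.faceOf f :=
  (r_mem_faceOf_iff (by decide)).trans (r_mem_faceOf_iff (by decide))

theorem iterate_faceStep_mem_faceOf {f g : Ω} (hg : g ∈ M.faceOf f) (j : ℕ) :
    M.faceStep^[j] g ∈ M.faceOf f :=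
  Function.Iterate.rec (· ∈ M.faceOf f) hg (fun _ ↦ faceStep_mem_faceOf_iff.mpr) j

theorem faceOf_subset {f : Ω} {S : Set Ω} (hf : f ∈ S) (h0 : ∀ g ∈ S, M.r 0 g ∈ S)
    (h1 : ∀ g ∈ S, M.r 1 g ∈ S) : M.faceOf f ⊆ S := by
  have hinv (j : Fin 3) : (M.r j)⁻¹ = M.r j := inv_eq_of_mul_eq_one_left (Equiv.ext (M.invol j))
  rintro _ ⟨w, hw, rfl⟩
  induction hw using Subgroup.closure_induction_left with
  | one => exact hf
  | mul_left x hx y _ ih =>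
    rcases hx with rfl | rfl
    exacts [h0 _ ih, h1 _ ih]
  | inv_mul_cancel x hx y _ ih =>
    rcases hx with rfl | rfl <;> rw [hinv]
    exacts [h0 _ ih, h1 _ ih]

theorem sameCycle_r_one {g h : Ω} (hgh : (M.r 1 * M.r 0).SameCycle g h) :
    (M.r 1 * M.r 0).SameCycle (M.r 1 g) (M.r 1 h) := by
  -- Conjugation by `r 1` inverts `r 1 * r 0`, as in any dihedral group.
  have hconj : M.r 1 * (M.r 1 * M.r 0) * (M.r 1)⁻¹ = (M.r 1 * M.r 0)⁻¹ := by
    rw [eq_inv_iff_mul_eq_one]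
    ext x
    simp [M.invol]
  rw [← Equiv.Perm.sameCycle_inv, ← hconj]
  exact hgh.conj

theorem sameCycle_of_mem_faceOf {f g : Ω} (hg : g ∈ M.faceOf f) :
    (M.r 1 * M.r 0).SameCycle f g ∨ (M.r 1 * M.r 0).SameCycle (M.r 1 f) g := by
  let S : Set Ω :=
    {g | (M.r 1 * M.r 0).SameCycle f g ∨ (M.r 1 * M.r 0).SameCycle (M.r 1 f) g}
  have h1 : ∀ g ∈ S, M.r 1 g ∈ S := by
    rintro g (hg | hg)
    · exact Or.inr (sameCycle_r_one hg)
    · exact Or.inl (M.invol 1 f ▸ sameCycle_r_one hg)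
  have h0 : ∀ g ∈ S, M.r 0 g ∈ S := fun g hg ↦ by
    have hstep : (M.r 1 * M.r 0) g ∈ S := hg.imp .apply_right .apply_right
    simpa only [Equiv.Perm.mul_apply, M.invol] using h1 _ hstep
  exact faceOf_subset (S := S) (Or.inl .rfl) h0 h1 hg

theorem exists_iterate_faceStep_of_mem_faceOf {f g : Ω} (hfin : (M.faceOf f).Finite)
    (hg : g ∈ M.faceOf f) :
    ∃ j : ℕ, M.faceStep^[j] f = g ∨ M.faceStep^[j] (M.r 1 f) = g := by
  have hf : f ∈ M.faceOf f := self_mem_faceOf f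
  have hf1 : M.r 1 f ∈ M.faceOf f := (r_mem_faceOf_iff (by decide)).mpr hf
  have hstep (x : Ω) : (M.r 1 * M.r 0) x ∈ M.faceOf f ↔ x ∈ M.faceOf f := faceStep_mem_faceOf_iff
  rcases sameCycle_of_mem_faceOf hg with h | h
  · exact (exists_iterate_eq_of_sameCycle hfin hstep hf hg h).imp fun _ ↦ Or.inl
  · exact (exists_iterate_eq_of_sameCycle hfin hstep hf1 hg h).imp fun _ ↦ Or.inr

theorem IsColoring.apply_iterate_faceStep {a : Ω → ZMod 2} (ha : M.IsColoring I a) (j : ℕ)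
    (f : Ω) : a (M.faceStep^[j] f) = a f + j • (I.indicator 1 0 + I.indicator 1 1) := by
  induction j with
  | zero => simp
  | succ j ih =>
    rw [Function.iterate_succ_apply', faceStep, ha.apply_r, ha.apply_r, ih, succ_nsmul]
    simp only [add_assoc]

/-- The correspondence between the flags of the faces of `fM` and `fN` along which a connected sum
is glued. The first constructor pairs `fM·(r₀r₁)ʲ` with `fN·(s₀s₁)ʲ`, the second one
`fM·r₁(r₀r₁)ʲ` with `fN·s₁(s₀s₁)ʲ`. -/
inductive FaceMatch (M : CMap Ω) (N : CMap Ω') (fM : Ω) (fN : Ω') : Ω → Ω' → Prop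
  | iterate (j : ℕ) : FaceMatch M N fM fN (M.faceStep^[j] fM) (N.faceStep^[j] fN)
  | iterate_r_one (j : ℕ) :
    FaceMatch M N fM fN (M.faceStep^[j] (M.r 1 fM)) (N.faceStep^[j] (N.r 1 fN))

namespace FaceMatch

variable {fM g : Ω} {fN g' : Ω'}

theorem symm : FaceMatch M N fM fN g g' → FaceMatch N M fN fM g' g
  | iterate j => iterate j
  | iterate_r_one j => iterate_r_one j

theorem mem_faceOf : FaceMatch M N fM fN g g' → g ∈ M.faceOf fM
  | iterate j => iterate_faceStep_mem_faceOf (self_mem_faceOf fM) j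
  | iterate_r_one j =>
    iterate_faceStep_mem_faceOf ((r_mem_faceOf_iff (by decide)).mpr (self_mem_faceOf fM)) j

theorem exists_of_mem_faceOf (N : CMap Ω') (fN : Ω') (hfin : (M.faceOf fM).Finite)
    (hg : g ∈ M.faceOf fM) : ∃ g', FaceMatch M N fM fN g g' := by
  obtain ⟨j, rfl | rfl⟩ := exists_iterate_faceStep_of_mem_faceOf hfin hg
  exacts [⟨_, iterate j⟩, ⟨_, iterate_r_one j⟩]

theorem apply_eq_add {a : Ω → ZMod 2} {b : Ω' → ZMod 2} (ha : M.IsColoring I a)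
    (hb : N.IsColoring I b) {c : ZMod 2} (hab : b fN = a fM + c)
    (hg : FaceMatch M N fM fN g g') : b g' = a g + c := by
  rcases hg with j | j
  · rw [hb.apply_iterate_faceStep, ha.apply_iterate_faceStep, hab, add_right_comm]
  · rw [hb.apply_iterate_faceStep, ha.apply_iterate_faceStep, hb.apply_r, ha.apply_r, hab]
    ring

end FaceMatch

end CMap

/-- The connections of `P` are those prescribed for the connected sum `M ⊕ N` with respect to
`(fM, fN)`. An edge of `M` leaving the face of `fM` is glued to the matching edge of `N`. -/
structure IsConnSum {Ω Ω' : Type} (M : CMap Ω) (N : CMap Ω') (fM : Ω) (fN : Ω')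
    (P : CMap (connSumFlags M N fM fN)) : Prop where
  r_zero : ∀ x, (P.r 0 x).1 = Sum.map (M.r 0) (N.r 0) x.1
  r_one : ∀ x, (P.r 1 x).1 = Sum.map (M.r 1) (N.r 1) x.1
  r_two_inl : ∀ x g, x.1 = Sum.inl g → M.r 2 g ∉ M.faceOf fM →
    (P.r 2 x).1 = Sum.inl (M.r 2 g)
  r_two_inr : ∀ x g, x.1 = Sum.inr g → N.r 2 g ∉ N.faceOf fN →
    (P.r 2 x).1 = Sum.inr (N.r 2 g)
  r_two_glue : ∀ g g', CMap.FaceMatch M N fM fN g g' → ∀ x, x.1 = Sum.inl (M.r 2 g) →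
    (P.r 2 x).1 = Sum.inr (N.r 2 g')

namespace IsConnSum

open CMap

variable {Ω Ω' : Type} {M : CMap Ω} {N : CMap Ω'} {fM : Ω} {fN : Ω'}
  {P : CMap (connSumFlags M N fM fN)} {I : Set (Fin 3)}

theorem r_inl (hP : IsConnSum M N fM fN P) {x : connSumFlags M N fM fN} {g : Ω} {j : Fin 3}
    (hx : x.1 = Sum.inl g) (hg : M.r j g ∉ M.faceOf fM) : (P.r j x).1 = Sum.inl (M.r j g) := by
  fin_cases j
  · simpa [hx] using hP.r_zero x
  · simpa [hx] using hP.r_one x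
  · exact hP.r_two_inl x g hx hg

theorem r_inr (hP : IsConnSum M N fM fN P) {x : connSumFlags M N fM fN} {g : Ω'} {j : Fin 3}
    (hx : x.1 = Sum.inr g) (hg : N.r j g ∉ N.faceOf fN) : (P.r j x).1 = Sum.inr (N.r j g) := by
  fin_cases j
  · simpa [hx] using hP.r_zero x
  · simpa [hx] using hP.r_one x
  · exact hP.r_two_inr x g hx hg

theorem r_two_glue_symm (hP : IsConnSum M N fM fN P)
    (hM2 : ∀ g ∈ M.faceOf fM, M.r 2 g ∉ M.faceOf fM) {g : Ω} {g' : Ω'}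
    (hg : FaceMatch M N fM fN g g') {x : connSumFlags M N fM fN}
    (hx : x.1 = Sum.inr (N.r 2 g')) : (P.r 2 x).1 = Sum.inl (M.r 2 g) := by
  let y : connSumFlags M N fM fN := ⟨Sum.inl (M.r 2 g), hM2 g hg.mem_faceOf⟩
  have hyx : P.r 2 y = x := Subtype.ext ((hP.r_two_glue g g' hg y rfl).trans hx.symm)
  rw [← hyx, P.invol]

theorem T_subset_left (hP : IsConnSum M N fM fN P)
    (hcyc : ∀ I ∉ M.T, ∃ f W, M.IsCycle f W ∧ ¬Consistent I W ∧
      ∀ g ∈ M.visits f W, g ∉ M.faceOf fM) : P.T ⊆ M.T := by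
  refine T_subset_T_of_inconsistent_cycles (S := (M.faceOf fM)ᶜ)
    (φ := fun g ↦ ⟨Sum.inl g, g.2⟩) (fun j g g' hgg' ↦ Subtype.ext ?_) hcyc
  rw [hP.r_inl rfl (hgg' ▸ g'.2), hgg']

theorem T_subset_right (hP : IsConnSum M N fM fN P)
    (hcyc : ∀ I ∉ N.T, ∃ f W, N.IsCycle f W ∧ ¬Consistent I W ∧
      ∀ g ∈ N.visits f W, g ∉ N.faceOf fN) : P.T ⊆ N.T := by
  refine T_subset_T_of_inconsistent_cycles (S := (N.faceOf fN)ᶜ)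
    (φ := fun g ↦ ⟨Sum.inr g, g.2⟩) (fun j g g' hgg' ↦ Subtype.ext ?_) hcyc
  rw [hP.r_inr rfl (hgg' ▸ g'.2), hgg']

theorem isColoring_elim (hP : IsConnSum M N fM fN P)
    (hM2 : ∀ g ∈ M.faceOf fM, M.r 2 g ∉ M.faceOf fM)
    (hMfin : (M.faceOf fM).Finite) (hNfin : (N.faceOf fN).Finite)
    {a : Ω → ZMod 2} {b : Ω' → ZMod 2} (ha : M.IsColoring I a) (hb : N.IsColoring I b)
    (hab : b fN = a fM + I.indicator 1 2) : P.IsColoring I fun x ↦ Sum.elim a b x.1 := by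
  have hglue {g : Ω} {g' : Ω'} (hg : FaceMatch M N fM fN g g') :
      b (N.r 2 g') = a (M.r 2 g) + I.indicator 1 2 := by
    rw [hb.apply_r, ha.apply_r, hg.apply_eq_add ha hb hab]
  refine isColoring_iff.mpr ?_
  rintro ⟨g | g', hx⟩ j
  · by_cases hg : M.r j g ∈ M.faceOf fM
    · obtain rfl : j = 2 := by_contra fun hj ↦ hx ((r_mem_faceOf_iff hj).mp hg)
      obtain ⟨g', hgg'⟩ := FaceMatch.exists_of_mem_faceOf N fN hMfin hg
      rw [hP.r_two_glue _ _ hgg' _ (by rw [M.invol]), Sum.elim_inr, Sum.elim_inl, hglue hgg',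
        M.invol]
    · rw [hP.r_inl rfl hg, Sum.elim_inl, Sum.elim_inl, ha.apply_r]
  · by_cases hg' : N.r j g' ∈ N.faceOf fN
    · obtain rfl : j = 2 := by_contra fun hj ↦ hx ((r_mem_faceOf_iff hj).mp hg')
      obtain ⟨g, hgg'⟩ := FaceMatch.exists_of_mem_faceOf M fM hNfin hg'
      have hcolor := hglue hgg'.symm
      rw [N.invol] at hcolor
      rw [hP.r_two_glue_symm hM2 hgg'.symm (by rw [N.invol]), Sum.elim_inl, Sum.elim_inr, hcolor,
        add_assoc, CharTwo.add_self_eq_zero, add_zero]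
    · rw [hP.r_inr rfl hg', Sum.elim_inr, Sum.elim_inr, hb.apply_r]

theorem inter_subset_T (hP : IsConnSum M N fM fN P)
    (hM2 : ∀ g ∈ M.faceOf fM, M.r 2 g ∉ M.faceOf fM)
    (hMfin : (M.faceOf fM).Finite) (hNfin : (N.faceOf fN).Finite) : M.T ∩ N.T ⊆ P.T := by
  rintro I ⟨⟨a, ha⟩, ⟨b, hb⟩⟩
  exact ⟨_, hP.isColoring_elim hM2 hMfin hNfin ha
    (hb.add_const (a fM + I.indicator 1 2 - b fN)) (add_sub_cancel _ _)⟩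

end IsConnSum

/-- if the connected sum `M ⊕ N` exists (formalized as a map `P` on
`(Ω ∖ F_M) ∪ (Ω' ∖ F_N)` whose connections are as prescribed), and if for every
`I ∉ T M` there is an `I`-inconsistent cycle of `M` avoiding the face `F_M`,
and likewise for `N`, then `T (M ⊕ N) = T M ∩ T N`. -/
theorem connSum_T_eq_inter {Ω Ω' : Type} (M : CMap Ω) (N : CMap Ω') (fM : Ω) (fN : Ω')
    (hM2 : ∀ g ∈ M.faceOf fM, M.r 2 g ∉ M.faceOf fM)
    (hN2 : ∀ g ∈ N.faceOf fN, N.r 2 g ∉ N.faceOf fN)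
    (hMfin : (M.faceOf fM).Finite) (hNfin : (N.faceOf fN).Finite)
    (hcard : (M.faceOf fM).ncard = (N.faceOf fN).ncard)
    (P : CMap ↥(connSumFlags M N fM fN))
    (h0 : ∀ x : ↥(connSumFlags M N fM fN),
      (P.r 0 x).1 = Sum.map (M.r 0) (N.r 0) x.1)
    (h1 : ∀ x : ↥(connSumFlags M N fM fN),
      (P.r 1 x).1 = Sum.map (M.r 1) (N.r 1) x.1)
    (h2a : ∀ (x : ↥(connSumFlags M N fM fN)) (g : Ω), x.1 = Sum.inl g →
      M.r 2 g ∉ M.faceOf fM → (P.r 2 x).1 = Sum.inl (M.r 2 g))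
    (h2b : ∀ (x : ↥(connSumFlags M N fM fN)) (g : Ω'), x.1 = Sum.inr g →
      N.r 2 g ∉ N.faceOf fN → (P.r 2 x).1 = Sum.inr (N.r 2 g))
    (h2c : ∀ (j : ℕ) (x : ↥(connSumFlags M N fM fN)),
      x.1 = Sum.inl (M.r 2 ((M.faceStep)^[j] fM)) →
      (P.r 2 x).1 = Sum.inr (N.r 2 ((N.faceStep)^[j] fN)))
    (h2d : ∀ (j : ℕ) (x : ↥(connSumFlags M N fM fN)),
      x.1 = Sum.inl (M.r 2 ((M.faceStep)^[j] (M.r 1 fM))) →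
      (P.r 2 x).1 = Sum.inr (N.r 2 ((N.faceStep)^[j] (N.r 1 fN))))
    (hMcyc : ∀ I : Set (Fin 3), I ∉ M.T → ∃ (f : Ω) (W : List (Fin 3)),
      M.IsCycle f W ∧ ¬Consistent I W ∧ ∀ g ∈ M.visits f W, g ∉ M.faceOf fM)
    (hNcyc : ∀ I : Set (Fin 3), I ∉ N.T → ∃ (f : Ω') (W : List (Fin 3)),
      N.IsCycle f W ∧ ¬Consistent I W ∧ ∀ g ∈ N.visits f W, g ∉ N.faceOf fN) :
    P.T = M.T ∩ N.T := by
  have hP : IsConnSum M N fM fN P :=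
    { r_zero := h0
      r_one := h1
      r_two_inl := h2a
      r_two_inr := h2b
      r_two_glue := by
        rintro _ _ (j | j) x hx
        exacts [h2c j x hx, h2d j x hx] }
  exact (Set.subset_inter (hP.T_subset_left hMcyc) (hP.T_subset_right hNcyc)).antisymm
    (hP.inter_subset_T hM2 hMfin hNfin)
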